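/- For 1 ≤ i ≤ n, let W_{n,i} denote the total degree of vertex i in the preferential attachment graph on n vertices, defined in law by the Markov chain: W_{i,i} = 1 + B_i where B_i is Bernoulli with success probability 1/(2i−1), and for i < j ≤ n, conditional on W_{j−1,i}, W_{j,i} = W_{j−1,i} + B_j where B_j is Bernoulli with success probability W_{j−1,i}/(2j−1). Then there is a constant C, independent of both n and i, such that dTV(L(W_{n,i}), Ge(1/E[W_{n,i}])) ≤ C/i. -/

import Mathlib

/-!
Write `g_p n = (1 - p) ^ n * p` for the mass of `Ge(p)` at `n + 1`. The step of the chain from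
time `j` to `j + 1` acts on masses by a linear operator `degStep m` with `m = 2j + 1`, and the mean
is multiplied by `1 + 1 / m`. The `ℓ¹` distance `D_j` between the law of the degree at time `j` and
the geometric law of the same mean `M = 1 / p` is controlled inductively.

* A linear birth step moves `g_p` along `∂ₚ g_p`, so `degStep m g_p` agrees to first order with
  the geometric law whose mean is larger by the factor `1 + 1 / m`. Grouping the difference into
  terms of constant sign, whose geometric sums are explicit, gives an `ℓ¹` error of at most
  `4 / (m (m + 1))`, uniformly in `p` (`geo_error`).
* The operator contracts `ℓ¹` except for masses at degrees above `m`, where the jump probability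
  exceeds one. The degree itself never gets there, so only the geometric tail matters, and it costs
  `2 (1 - p) ^ m / (m p)` (`degStep_contract`). Since `M ^ 2 ≤ 4 j`, this is at most `12 / j ^ 2`.

Hence `D_{j+1} ≤ D_j + 13 / j ^ 2` (`step_bound`), while `D_i ≤ 3 / i` (`base_bound`). As
`13 / j ^ 2 ≤ 26 / j - 26 / (j + 1)`, the sum telescopes to `D_n ≤ 29 / i`, and `D_n` dominates
the total variation distance (`dTV_le`).
-/

open MeasureTheory ProbabilityTheory Real

/-- `Ge(p){B}`: probability that a geometric random variable on `{1,2,...}`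
with parameter `p` (mass `(1-p)^{k-1} p` at `k`) lies in `B ⊆ ℕ`. -/
noncomputable def geProbN (p : ℝ) (B : Set ℕ) : ℝ :=
  ∑' k : ℕ, B.indicator (fun _ => (1 - p) ^ k * p) (k + 1)

/-- Total variation distance between the law of a `ℕ`-valued random
variable `W` (under `μ`) and the geometric distribution `Ge(p)` on `{1,2,...}`. -/
noncomputable def dTVGeN {Ω : Type*} [MeasurableSpace Ω] (μ : Measure Ω)
    (W : Ω → ℕ) (p : ℝ) : ℝ :=
  ⨆ B : Set ℕ, |(μ {ω | W ω ∈ B}).toReal - geProbN p B|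

/-! ### Bounds in `ℓ¹` -/

/-- `f` is absolutely summable with `ℓ¹` norm at most `B`. -/
def L1le (f : ℕ → ℝ) (B : ℝ) : Prop :=
  Summable (fun n => |f n|) ∧ ∑' n, |f n| ≤ B

lemma L1le.of_le {f h : ℕ → ℝ} {s B : ℝ} (hf : ∀ n, |f n| ≤ h n) (hs : HasSum h s)
    (hB : s ≤ B) : L1le f B := by
  have h1 : Summable (fun n => |f n|) :=
    Summable.of_nonneg_of_le (fun _ => abs_nonneg _) hf hs.summable
  exact ⟨h1, (hasSum_le hf h1.hasSum hs).trans hB⟩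

lemma L1le.add {f g : ℕ → ℝ} {A B : ℝ} (hf : L1le f A) (hg : L1le g B) :
    L1le (fun n => f n + g n) (A + B) :=
  L1le.of_le (fun _ => abs_add_le _ _) (hf.1.hasSum.add hg.1.hasSum) (add_le_add hf.2 hg.2)

lemma L1le.mono {f : ℕ → ℝ} {A B : ℝ} (hf : L1le f A) (h : A ≤ B) : L1le f B :=
  ⟨hf.1, hf.2.trans h⟩

/-! ### The one-step transition operator -/

/-- One step of the degree chain acting on masses: `f n` is the mass at degree `n + 1`, and
degree `k` moves to `k + 1` with probability `k / m`. The formula is used also for `k > m`, where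
it is linear but no longer stochastic. -/
noncomputable def degStep (m : ℝ) (f : ℕ → ℝ) : ℕ → ℝ
  | 0 => f 0 * (1 - 1 / m)
  | n + 1 => f (n + 1) * (1 - (n + 2) / m) + f n * ((n + 1) / m)

lemma degStep_sub (m : ℝ) (f g : ℕ → ℝ) (n : ℕ) :
    degStep m (fun n => f n - g n) n = degStep m f n - degStep m g n := by
  cases n <;> simp only [degStep] <;> ring

/-- Truncated means grow by the factor `1 + 1 / m`, up to a boundary term. -/
lemma sum_degStep (m : ℝ) (f : ℕ → ℝ) (N : ℕ) :
    ∑ n ∈ Finset.range (N + 1), degStep m f n * ((n : ℝ) + 1) =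
      (∑ n ∈ Finset.range (N + 1), f n * ((n : ℝ) + 1)) * (1 + 1 / m)
        - (N + 2) * (N + 1) * f N / m := by
  induction N with
  | zero => simp [degStep]; ring
  | succ N ih =>
    rw [Finset.sum_range_succ, ih, Finset.sum_range_succ _ (N + 1)]
    simp only [degStep]
    push_cast
    ring

/-! ### Geometric sums and the action of a step on a geometric law -/

lemma hasSum_geo {p : ℝ} (h0 : 0 < p) (h1 : p < 1) :
    HasSum (fun n : ℕ => (1 - p) ^ n) (1 / p) := by
  have := hasSum_geometric_of_lt_one (r := 1 - p) (by linarith) (by linarith)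
  simpa using this

lemma hasSum_geo_succ {p : ℝ} (h0 : 0 < p) (h1 : p < 1) :
    HasSum (fun n : ℕ => ((n : ℝ) + 1) * (1 - p) ^ n) (1 / p ^ 2) := by
  have h := hasSum_coe_mul_geometric_of_norm_lt_one (r := 1 - p)
    (by rw [Real.norm_eq_abs, abs_lt]; constructor <;> linarith)
  have h2 := h.add (hasSum_geo h0 h1)
  have e1 : (fun n : ℕ => ((n : ℝ) + 1) * (1 - p) ^ n)
      = fun n : ℕ => (n : ℝ) * (1 - p) ^ n + (1 - p) ^ n := by
    ext n; ring
  have e2 : 1 / p ^ 2 = (1 - p) / (1 - (1 - p)) ^ 2 + 1 / p := by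
    rw [sub_sub_cancel]
    field_simp
    ring
  rw [e1, e2]
  exact h2

lemma hasSum_geo_deriv {p : ℝ} (h0 : 0 < p) (h1 : p < 1) :
    HasSum (fun n : ℕ => (n : ℝ) * (1 - p) ^ (n - 1)) (1 / p ^ 2) := by
  rw [← hasSum_nat_add_iff' 1]
  simpa using hasSum_geo_succ h0 h1

lemma pow_tangent {q d : ℝ} (hq : 0 ≤ q) (hd : 0 ≤ d) (n : ℕ) :
    0 ≤ (q + d) ^ n - q ^ n - d * (n * q ^ (n - 1)) := by
  rcases n with _ | n
  · simp
  induction n with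
  | zero => simp
  | succ n ih =>
    simp only [Nat.add_sub_cancel] at ih ⊢
    have h1 := mul_nonneg (add_nonneg hq hd) ih
    have h2 : 0 ≤ d * d * ((n + 1) * q ^ n) := by positivity
    push_cast at h1 ⊢
    have e : (q + d) ^ (n + 1 + 1) - q ^ (n + 1 + 1) - d * ((n + 1 + 1) * q ^ (n + 1))
      = (q + d) * ((q + d) ^ (n + 1) - q ^ (n + 1) - d * ((n + 1) * q ^ n))
        + d * d * ((n + 1) * q ^ n) := by ring
    rw [e]; linarith

/-- The step moves a geometric law along its parameter derivative:
`(n + 1) g n - n g (n - 1) = p ∂ₚ g n` for `g n = (1 - p) ^ n * p`. -/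
lemma degStep_geo (m p : ℝ) (n : ℕ) :
    degStep m (fun n => (1 - p) ^ n * p) n =
      (1 - p) ^ n * p + p / m * (p * (n * (1 - p) ^ (n - 1)) - (1 - p) ^ n) := by
  rcases n with _ | n
  · simp [degStep]; ring
  · simp only [degStep, Nat.add_sub_cancel]
    push_cast
    ring

/-- A step maps `Ge(p)` to `Ge(p m / (m + 1))` up to a second-order error, uniformly in `p`. -/
lemma geo_error {m p : ℝ} (hm : 0 < m) (h0 : 0 < p) (h1 : p < 1) :
    L1le (fun n => degStep m (fun n => (1 - p) ^ n * p) n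
      - (1 - p * (m / (m + 1))) ^ n * (p * (m / (m + 1)))) (4 / (m * (m + 1))) := by
  set d := p / (m + 1) with hd
  have hd0 : 0 < d := by positivity
  have hp' : p * (m / (m + 1)) = p - d := by rw [hd]; field_simp; ring
  have hpm : p / m = d + d / m := by rw [hd]; field_simp
  have hp'0 : 0 < p - d := by rw [← hp']; positivity
  have hp'1 : p - d < 1 := by linarith
  have hq : 0 ≤ 1 - p := by linarith
  rw [hp']
  have S1 := hasSum_geo h0 h1
  have S2 := hasSum_geo_deriv h0 h1
  have S3 := hasSum_geo hp'0 hp'1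
  have H := ((((S3.sub S1).sub (S2.mul_left d)).mul_left p).add
    ((S3.sub S1).mul_left d)).add (((S2.mul_left p).add S1).mul_left (d / m))
  refine L1le.of_le (fun n => ?_) H ?_
  · rw [degStep_geo, hpm]
    have eq : 1 - (p - d) = 1 - p + d := by ring
    rw [eq]
    have R := pow_tangent hq hd0.le n
    have Q : 0 ≤ (1 - p + d) ^ n - (1 - p) ^ n := by
      have : (1 - p) ^ n ≤ (1 - p + d) ^ n := pow_le_pow_left₀ hq (by linarith) n
      linarith
    have A : 0 ≤ (n : ℝ) * (1 - p) ^ (n - 1) := by positivity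
    have B : 0 ≤ (1 - p) ^ n := by positivity
    generalize (n : ℝ) * (1 - p) ^ (n - 1) = a at *
    generalize (1 - p) ^ n = b at *
    generalize (1 - p + d) ^ n = c at *
    have t1 := mul_nonneg h0.le R
    have t2 := mul_nonneg hd0.le Q
    have hdm : 0 ≤ d / m := by positivity
    have t3 := mul_nonneg hdm (mul_nonneg h0.le A)
    have t4 := mul_nonneg hdm B
    rw [abs_le]
    constructor <;> nlinarith
  · have e1 : p - d = p * m / (m + 1) := by rw [← hp']; ring
    rw [e1, hd]
    apply le_of_eq
    field_simp
    ring

/-! ### Near-contraction of the step -/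

/-- On sub-probabilities supported below `m` the step contracts `ℓ¹`; the tail of the geometric
law beyond `m`, where the step is not stochastic, contributes the extra term. -/
lemma degStep_contract {m : ℕ} (hm : 0 < m) {p B : ℝ} (h0 : 0 < p) (h1 : p < 1)
    {f : ℕ → ℝ} (hf : ∀ n, m ≤ n → f n = 0) (hB : L1le (fun n => f n - (1 - p) ^ n * p) B) :
    L1le (degStep m (fun n => f n - (1 - p) ^ n * p)) (B + 2 / (m * p) * (1 - p) ^ m) := by
  set d : ℕ → ℝ := fun n => f n - (1 - p) ^ n * p with hd
  have hm' : (0 : ℝ) < m := by exact_mod_cast hm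
  have hq : 0 ≤ 1 - p := by linarith
  let b : ℕ → ℝ := fun n => |d n| * |1 - ((n : ℝ) + 1) / m|
  let c : ℕ → ℝ := fun n => |d n| * (((n : ℝ) + 1) / m)
  let e : ℕ → ℝ := fun n => if n < m then 0 else 2 * ((1 - p) ^ n * p) * (((n : ℝ) + 1) / m - 1)
  have hb0 : ∀ n, 0 ≤ b n := fun n => by positivity
  have hc0 : ∀ n, 0 ≤ c n := fun n => by positivity
  have hbc : ∀ n, b n + c n ≤ |d n| + e n := by
    intro n
    by_cases hn : n < m
    · have : ((n : ℝ) + 1) / m ≤ 1 := by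
        rw [div_le_one hm']; exact_mod_cast hn
      simp only [b, c, e, if_pos hn]
      rw [abs_of_nonneg (by linarith : 0 ≤ 1 - ((n : ℝ) + 1) / m)]
      apply le_of_eq; ring
    · have hn' : m ≤ n := not_lt.mp hn
      have : 1 ≤ ((n : ℝ) + 1) / m := by
        rw [one_le_div hm']
        have : (m : ℝ) ≤ n := by exact_mod_cast hn'
        linarith
      have hdn : |d n| = (1 - p) ^ n * p := by
        simp only [hd, hf n hn', zero_sub, abs_neg]
        exact abs_of_nonneg (by positivity)
      simp only [b, c, e, if_neg hn]
      rw [abs_of_nonpos (by linarith : 1 - ((n : ℝ) + 1) / m ≤ 0), hdn]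
      apply le_of_eq; ring
  have he : HasSum e (2 / (m * p) * (1 - p) ^ m) := by
    rw [← hasSum_nat_add_iff' m]
    have hz : ∑ n ∈ Finset.range m, e n = 0 :=
      Finset.sum_eq_zero fun n hn => if_pos (Finset.mem_range.mp hn)
    rw [hz, sub_zero]
    have e1 : (fun n => e (n + m))
        = fun n : ℕ => 2 / m * (1 - p) ^ m * p * (((n : ℝ) + 1) * (1 - p) ^ n) := by
      ext n
      have : ¬ (n + m < m) := by omega
      simp only [e, if_neg this]
      push_cast
      rw [pow_add]
      field_simp
      ring
    have e2 : 2 / (m * p) * (1 - p) ^ m = 2 / m * (1 - p) ^ m * p * (1 / p ^ 2) := by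
      field_simp
    rw [e1, e2]
    exact (hasSum_geo_succ h0 h1).mul_left _
  have hde := hB.1.hasSum.add he
  have sb : Summable b := Summable.of_nonneg_of_le hb0
    (fun n => by linarith [hbc n, hc0 n]) hde.summable
  have sc : Summable c := Summable.of_nonneg_of_le hc0
    (fun n => by linarith [hbc n, hb0 n]) hde.summable
  let c' : ℕ → ℝ := fun n => Nat.casesOn n 0 c
  have hc' : HasSum c' (∑' n, c n) := by
    rw [← hasSum_nat_add_iff' 1]
    simpa [c'] using sc.hasSum
  refine L1le.of_le (h := fun n => b n + c' n) (fun n => ?_) (sb.hasSum.add hc') ?_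
  · rcases n with _ | n
    · simp [degStep, b, c', abs_mul]
    · simp only [degStep, b, c', c]
      refine (abs_add_le _ _).trans (le_of_eq ?_)
      rw [abs_mul, abs_mul, abs_of_nonneg (by positivity : 0 ≤ ((n : ℝ) + 1) / m)]
      push_cast
      rw [show (n : ℝ) + 1 + 1 = n + 2 by ring]
  · have := hasSum_le hbc (sb.hasSum.add sc.hasSum) hde
    have := hB.2
    linarith

/-- `(1 - p) ^ m ≤ exp (-pm) ≤ 6 / (pm) ^ 3`. -/
lemma tail_bound {m : ℕ} {p : ℝ} (hm : 0 < m) (h0 : 0 < p) (h1 : p < 1) :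
    (1 - p) ^ m ≤ 6 / (m * p) ^ 3 := by
  have hm' : (0 : ℝ) < m := by exact_mod_cast hm
  have hx : 0 < (m : ℝ) * p := by positivity
  have a : (1 - p) ^ m ≤ Real.exp (-(m * p)) := by
    calc (1 - p) ^ m ≤ (Real.exp (-p)) ^ m :=
          pow_le_pow_left₀ (by linarith) (Real.one_sub_le_exp_neg p) m
      _ = Real.exp (-(m * p)) := by rw [← Real.exp_nat_mul]; ring_nf
  have b : (m * p) ^ 3 / 6 ≤ Real.exp (m * p) := by
    have := Real.pow_div_factorial_le_exp (m * p) hx.le 3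
    norm_num [Nat.factorial] at this ⊢
    exact this
  refine a.trans ?_
  rw [Real.exp_neg, show 6 / ((m : ℝ) * p) ^ 3 = ((m * p) ^ 3 / 6)⁻¹ by rw [inv_div]]
  exact inv_anti₀ (by positivity) b

/-- One step of the chain raises the `ℓ¹` distance to the geometric law of the same mean by
`O(1/j²)`. -/
lemma step_bound {j : ℕ} (hj : 1 ≤ j) {M B : ℝ} (hM : 1 < M) (hM2 : M ^ 2 ≤ 4 * j)
    {f : ℕ → ℝ} (hf : ∀ n, j + 1 ≤ n → f n = 0)
    (hB : L1le (fun n => f n - (1 - 1 / M) ^ n * (1 / M)) B) :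
    L1le (fun n => degStep (2 * j + 1) f n -
        (1 - 1 / (M * (1 + 1 / (2 * j + 1)))) ^ n * (1 / (M * (1 + 1 / (2 * j + 1)))))
      (B + 13 / j ^ 2) := by
  have hj' : (1 : ℝ) ≤ j := by exact_mod_cast hj
  have hM0 : 0 < M := by linarith
  have hp0 : 0 < 1 / M := by positivity
  have hp1 : 1 / M < 1 := by rw [div_lt_one hM0]; exact hM
  have c1 := degStep_contract (m := 2 * j + 1) (by omega) hp0 hp1
    (fun n hn => hf n (by omega)) hB
  have c2 := geo_error (m := 2 * (j : ℝ) + 1) (by positivity) hp0 hp1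
  have tb := tail_bound (m := 2 * j + 1) (by omega) hp0 hp1
  push_cast at c1 tb
  have ep : 1 / (M * (1 + 1 / (2 * (j : ℝ) + 1)))
      = 1 / M * ((2 * j + 1) / (2 * j + 1 + 1)) := by field_simp
  rw [ep]
  have c3 := c1.add c2
  simp only [degStep_sub, sub_add_sub_cancel] at c3
  refine c3.mono ?_
  -- With `x = M / (2j+1)`, the tail term is at most `12 x ^ 4`, and `x ^ 2 ≤ 1 / j`.
  have hx : M ^ 2 / (2 * (j : ℝ) + 1) ^ 2 ≤ 1 / j := by
    rw [div_le_div_iff₀ (by positivity) (by positivity)]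
    nlinarith
  have t : 2 / ((2 * (j : ℝ) + 1) * (1 / M)) * (1 - 1 / M) ^ (2 * j + 1) ≤ 12 / j ^ 2 := by
    calc _ ≤ 2 / ((2 * (j : ℝ) + 1) * (1 / M)) * (6 / ((2 * (j : ℝ) + 1) * (1 / M)) ^ 3) := by
          gcongr
      _ = 12 * (M ^ 2 / (2 * (j : ℝ) + 1) ^ 2) ^ 2 := by field_simp; norm_num
      _ ≤ 12 * (1 / j) ^ 2 := by gcongr
      _ = 12 / j ^ 2 := by field_simp
  have s : 4 / ((2 * (j : ℝ) + 1) * (2 * j + 1 + 1)) ≤ 1 / j ^ 2 := by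
    rw [div_le_div_iff₀ (by positivity) (by positivity)]
    nlinarith
  have : (13 : ℝ) / j ^ 2 = 12 / j ^ 2 + 1 / j ^ 2 := by ring
  linarith

/-! ### From random variables to masses -/

section prob

variable {Ω : Type} [MeasurableSpace Ω] {μ : Measure Ω}

/-- The two prescribed transition probabilities already exhaust the mass of each state. -/
lemma ae_step [IsProbabilityMeasure μ] {X Y : Ω → ℕ} (hX : Measurable X) (hY : Measurable Y)
    {r : ℕ → ℝ}
    (h1 : ∀ w : ℕ, (μ {ω | Y ω = w + 1 ∧ X ω = w}).toReal = (μ {ω | X ω = w}).toReal * r w)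
    (h2 : ∀ w : ℕ, (μ {ω | Y ω = w ∧ X ω = w}).toReal = (μ {ω | X ω = w}).toReal * (1 - r w)) :
    ∀ᵐ ω ∂μ, Y ω = X ω ∨ Y ω = X ω + 1 := by
  have key : ∀ w, ∀ᵐ ω ∂μ, X ω = w → (Y ω = w ∨ Y ω = w + 1) := by
    intro w
    have m1 : MeasurableSet {ω | X ω = w} := hX (measurableSet_singleton w)
    have m2 : MeasurableSet {ω | Y ω = w ∧ X ω = w} :=
      (hY (measurableSet_singleton w)).inter m1
    have m3 : MeasurableSet {ω | Y ω = w + 1 ∧ X ω = w} :=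
      (hY (measurableSet_singleton (w + 1))).inter m1
    have hdis : Disjoint {ω | Y ω = w ∧ X ω = w} {ω | Y ω = w + 1 ∧ X ω = w} := by
      rw [Set.disjoint_left]
      rintro ω ⟨a, _⟩ ⟨b, _⟩
      omega
    have hu : μ.real ({ω | Y ω = w ∧ X ω = w} ∪ {ω | Y ω = w + 1 ∧ X ω = w})
        = μ.real {ω | X ω = w} := by
      rw [measureReal_union hdis m3]
      simp only [Measure.real]
      rw [h1, h2]; ring
    have hsub : ({ω | Y ω = w ∧ X ω = w} ∪ {ω | Y ω = w + 1 ∧ X ω = w}) ⊆ {ω | X ω = w} := by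
      rintro ω (⟨_, a⟩ | ⟨_, a⟩) <;> exact a
    have hd := measureReal_sdiff (μ := μ) hsub (m2.union m3)
    rw [hu, sub_self, measureReal_eq_zero_iff] at hd
    rw [ae_iff]
    refine measure_mono_null ?_ hd
    intro ω hω
    simp only [Set.mem_ofPred_eq, Classical.not_imp, not_or] at hω
    refine ⟨hω.1, ?_⟩
    rintro (⟨a, _⟩ | ⟨a, _⟩)
    · exact hω.2.1 a
    · exact hω.2.2 a
  filter_upwards [ae_all_iff.mpr key] with ω h
  exact h _ rfl

/-- The masses of consecutive degrees are related by `degStep`. -/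
lemma mass_step [IsProbabilityMeasure μ] {X Y : Ω → ℕ} (hX : Measurable X) (hY : Measurable Y)
    {m : ℝ}
    (h1 : ∀ w : ℕ, (μ {ω | Y ω = w + 1 ∧ X ω = w}).toReal
      = (μ {ω | X ω = w}).toReal * (w / m))
    (h2 : ∀ w : ℕ, (μ {ω | Y ω = w ∧ X ω = w}).toReal
      = (μ {ω | X ω = w}).toReal * (1 - w / m)) (n : ℕ) :
    μ.real {ω | Y ω = n + 1} = degStep m (fun n => μ.real {ω | X ω = n + 1}) n := by
  have hae := ae_step hX hY h1 h2
  have hdis : Disjoint {ω | Y ω = n + 1 ∧ X ω = n + 1} {ω | Y ω = n + 1 ∧ X ω = n} := by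
    rw [Set.disjoint_left]
    rintro ω ⟨_, a⟩ ⟨_, b⟩
    omega
  have m3 : MeasurableSet {ω | Y ω = n + 1 ∧ X ω = n} :=
    (hY (measurableSet_singleton (n + 1))).inter (hX (measurableSet_singleton n))
  have e : μ.real {ω | Y ω = n + 1}
      = μ.real ({ω | Y ω = n + 1 ∧ X ω = n + 1} ∪ {ω | Y ω = n + 1 ∧ X ω = n}) := by
    apply measureReal_congr
    filter_upwards [hae] with ω h
    apply propext
    change Y ω = n + 1 ↔ (Y ω = n + 1 ∧ X ω = n + 1) ∨ (Y ω = n + 1 ∧ X ω = n)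
    omega
  rw [e, measureReal_union hdis m3]
  have a := h2 (n + 1)
  have b := h1 n
  simp only [Measure.real] at *
  rw [a, b]
  rcases n with _ | n
  · simp [degStep]
  · simp only [degStep]
    push_cast
    ring

/-- Expectations of a bounded positive integer variable as finite sums over its masses. -/
lemma integral_mass [IsProbabilityMeasure μ] {X : Ω → ℕ} (hX : Measurable X) {N : ℕ}
    (hN : ∀ᵐ ω ∂μ, 1 ≤ X ω ∧ X ω ≤ N) (h : ℕ → ℝ) :
    ∫ ω, h (X ω) ∂μ = ∑ n ∈ Finset.range N, μ.real {ω | X ω = n + 1} * h (n + 1) := by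
  have e : (fun ω => h (X ω)) =ᵐ[μ] fun ω => ∑ n ∈ Finset.range N,
      Set.indicator {ω | X ω = n + 1} (fun _ => h (n + 1)) ω := by
    filter_upwards [hN] with ω hω
    rw [Finset.sum_eq_single (X ω - 1)]
    · have : X ω - 1 + 1 = X ω := by omega
      simp [Set.indicator, this]
    · intro n _ hn
      apply Set.indicator_of_notMem
      intro (hh : X ω = n + 1)
      omega
    · intro hh
      rw [Finset.mem_range] at hh
      omega
  have ms : ∀ n : ℕ, MeasurableSet {ω | X ω = n + 1} :=
    fun n => hX (measurableSet_singleton (n + 1))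
  rw [integral_congr_ae e, integral_finsetSum]
  · refine Finset.sum_congr rfl fun n _ => ?_
    rw [integral_indicator_const _ (ms n), smul_eq_mul]
  · intro n _
    exact (integrable_const _).indicator (ms n)

/-- An `ℓ¹` bound on mass differences bounds the total variation distance. -/
lemma dTV_le [IsProbabilityMeasure μ] {X : Ω → ℕ} (hX : Measurable X) {N : ℕ}
    (hN : ∀ᵐ ω ∂μ, 1 ≤ X ω ∧ X ω ≤ N) {p A : ℝ} (h0 : 0 < p) (h1 : p < 1)
    (hA : L1le (fun n => μ.real {ω | X ω = n + 1} - (1 - p) ^ n * p) A) :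
    dTVGeN μ X p ≤ A := by
  refine ciSup_le fun B => ?_
  let ι : ℕ → ℝ := B.indicator 1
  have hι : ∀ k, |ι k| ≤ 1 := fun k => by
    by_cases hk : k ∈ B <;> simp [ι, hk]
  have mB : MeasurableSet {ω | X ω ∈ B} := hX (MeasurableSet.of_discrete)
  have e1 : (μ {ω | X ω ∈ B}).toReal
      = ∑ n ∈ Finset.range N, μ.real {ω | X ω = n + 1} * ι (n + 1) := by
    rw [← integral_mass hX hN]
    change μ.real _ = _
    rw [← integral_indicator_one mB]
    rfl
  have z : ∀ n, n ∉ Finset.range N → μ.real {ω | X ω = n + 1} * ι (n + 1) = 0 := by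
    intro n hn
    rw [Finset.mem_range] at hn
    have : μ {ω | X ω = n + 1} = 0 := by
      refine measure_mono_null ?_ (ae_iff.mp hN)
      intro ω (hω : X ω = n + 1) hh
      omega
    simp [Measure.real, this]
  have s1 := hasSum_sum_of_ne_finset_zero (L := SummationFilter.unconditional ℕ) z
  have sg : Summable fun n : ℕ => (1 - p) ^ n * p * ι (n + 1) := by
    refine Summable.of_norm_bounded ((hasSum_geo h0 h1).mul_right p).summable fun n => ?_
    have : 0 ≤ (1 - p) ^ n * p := mul_nonneg (pow_nonneg (by linarith) n) h0.le
    rw [norm_mul, Real.norm_of_nonneg this]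
    exact mul_le_of_le_one_right this (hι _)
  have e2 : geProbN p B = ∑' n : ℕ, (1 - p) ^ n * p * ι (n + 1) := by
    refine tsum_congr fun n => ?_
    by_cases hk : n + 1 ∈ B <;> simp [ι, hk]
  have s := s1.sub sg.hasSum
  rw [e1, e2, ← s.tsum_eq]
  have hle : ∀ n, ‖μ.real {ω | X ω = n + 1} * ι (n + 1) - (1 - p) ^ n * p * ι (n + 1)‖
      ≤ |μ.real {ω | X ω = n + 1} - (1 - p) ^ n * p| := by
    intro n
    rw [← sub_mul, norm_mul]
    exact mul_le_of_le_one_right (abs_nonneg _) (hι _)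
  exact (tsum_of_norm_bounded hA.1.hasSum hle).trans hA.2

/-- At time `i` the degree is `1` or `2`, and the `ℓ¹` distance is at most `3 / i`. -/
lemma base_bound [IsProbabilityMeasure μ] {X : Ω → ℕ} (hX : Measurable X) {i : ℕ} (hi : 1 ≤ i)
    (h12 : ∀ ω, X ω = 1 ∨ X ω = 2) (h2 : (μ {ω | X ω = 2}).toReal = 1 / (2 * (i : ℝ) - 1)) :
    μ.real {ω | X ω = 1} = 1 - 1 / (2 * (i : ℝ) - 1) ∧
    L1le (fun n => μ.real {ω | X ω = n + 1}
      - (1 - 1 / (2 * (i : ℝ) / (2 * i - 1))) ^ n * (1 / (2 * (i : ℝ) / (2 * i - 1)))) (3 / i) := by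
  have hi' : (1 : ℝ) ≤ i := by exact_mod_cast hi
  have hpos : (0 : ℝ) < 2 * i - 1 := by linarith
  have m2 : MeasurableSet {ω | X ω = 2} := hX (measurableSet_singleton 2)
  have hP1 : μ.real {ω | X ω = 1} = 1 - 1 / (2 * (i : ℝ) - 1) := by
    have : {ω | X ω = 1} = {ω | X ω = 2}ᶜ := by
      ext ω
      have := h12 ω
      simp only [Set.mem_ofPred_eq, Set.mem_compl_iff]
      omega
    rw [this, probReal_compl_eq_one_sub m2, Measure.real, h2]
  refine ⟨hP1, ?_⟩
  set a : ℝ := 1 / (2 * i) with ha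
  have ha0 : 0 < a := by positivity
  have ha1 : a < 1 := by rw [ha, div_lt_one (by positivity)]; linarith
  have ep : 1 / (2 * (i : ℝ) / (2 * i - 1)) = 1 - a := by rw [ha]; field_simp
  rw [ep]
  have S := (hasSum_geo (p := 1 - a) (by linarith) (by linarith)).mul_right (1 - a)
  rw [show 1 / (1 - a) * (1 - a) = 1 by field_simp [(by linarith : (1 - a) ≠ 0)]] at S
  simp only [sub_sub_cancel] at S ⊢
  -- At index `0` (degree `1`) use the exact difference, elsewhere the sum of both masses.
  have S' : HasSum (fun n : ℕ => if n = 0 then 0 else a ^ n * (1 - a)) a := by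
    have h := S
    rw [← hasSum_nat_add_iff' 1] at h ⊢
    simpa using h
  have F := hasSum_sum_of_ne_finset_zero (f := fun n : ℕ => if n = 0 then 1 / (2 * (i : ℝ) - 1) - a
    else if n = 1 then 1 / (2 * (i : ℝ) - 1) else 0) (s := Finset.range 2)
    (L := SummationFilter.unconditional ℕ) (by
      intro n hn
      rw [Finset.mem_range] at hn
      rw [if_neg (by omega), if_neg (by omega)])
  have hai : a ≤ 1 / (2 * (i : ℝ) - 1) := by
    rw [ha]; exact one_div_le_one_div_of_le hpos (by linarith)
  have hui : 1 / (2 * (i : ℝ) - 1) ≤ 1 / i := one_div_le_one_div_of_le (by linarith) (by linarith)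
  refine L1le.of_le (fun n => ?_) (F.add S') ?_
  · rcases n with _ | _ | n
    · simp only [zero_add, hP1, pow_zero, one_mul, if_true, add_zero]
      rw [abs_of_nonpos (by linarith)]
      linarith
    · have h2' : μ.real {ω | X ω = 0 + 1 + 1} = 1 / (2 * (i : ℝ) - 1) := h2
      simp only [h2']
      norm_num
      have h3 : 0 ≤ a * (1 - a) := mul_nonneg ha0.le (by linarith)
      have h4 : 0 < (2 * (i : ℝ) - 1)⁻¹ := by positivity
      rw [abs_le]; constructor <;> linarith
    · have : {ω | X ω = n + 1 + 1 + 1} = ∅ := by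
        ext ω
        have := h12 ω
        simp only [Set.mem_ofPred_eq, Set.mem_empty_iff_false, iff_false]
        omega
      have h3 : 0 ≤ a ^ (n + 1 + 1) * (1 - a) :=
        mul_nonneg (pow_nonneg ha0.le _) (by linarith)
      simp [this, abs_of_nonneg h3]
  · simp [Finset.sum_range_succ]
    have : (3 : ℝ) / i = 1 / i + 1 / i + 1 / i := by ring
    simp only [one_div] at *
    linarith

end prob

/-! ### Induction along the chain -/

/-- The total degree of a fixed vertex `i` in the preferential attachment graph on `n`
vertices is approximately geometric, with an error bound uniform in `n` and `i`. -/
theorem preferential_attachment_fixed_vertex_geometric :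
    ∃ C : ℝ, ∀ (Ω : Type) (_ : MeasurableSpace Ω) (μ : Measure Ω)
      (_ : IsProbabilityMeasure μ) (n i : ℕ), 1 ≤ i → i ≤ n →
      ∀ V : ℕ → Ω → ℕ, (∀ j, Measurable (V j)) →
      -- `V j` is the total degree `W_{j,i}` of vertex `i` at time `j`;
      -- initial step: `W_{i,i} = 1 + Bernoulli(1/(2i-1))`
      (∀ ω, V i ω = 1 ∨ V i ω = 2) →
      ((μ {ω | V i ω = 2}).toReal = 1 / (2 * (i : ℝ) - 1)) →
      -- transition: conditional on `W_{j,i} = w`, vertex `j+1` attaches to `i`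
      -- with probability `w/(2(j+1)-1)`
      (∀ j : ℕ, i ≤ j → j < n → ∀ w : ℕ,
        (μ {ω | V (j + 1) ω = w + 1 ∧ V j ω = w}).toReal
            = (μ {ω | V j ω = w}).toReal * w / (2 * ((j : ℝ) + 1) - 1) ∧
        (μ {ω | V (j + 1) ω = w ∧ V j ω = w}).toReal
            = (μ {ω | V j ω = w}).toReal * (1 - w / (2 * ((j : ℝ) + 1) - 1))) →
      dTVGeN μ (V n) (1 / ∫ ω, (V n ω : ℝ) ∂μ) ≤ C / i := by
  refine ⟨29, ?_⟩
  intro Ω _ μ _ n i hi hin V hV h12 hinit htr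
  have hi' : (1 : ℝ) ≤ i := by exact_mod_cast hi
  have htr1 : ∀ j, i ≤ j → j < n → ∀ w : ℕ, (μ {ω | V (j + 1) ω = w + 1 ∧ V j ω = w}).toReal
      = (μ {ω | V j ω = w}).toReal * (w / (2 * (j : ℝ) + 1)) := by
    intro j h h' w
    rw [(htr j h h' w).1, mul_div_assoc, show 2 * ((j : ℝ) + 1) - 1 = 2 * j + 1 by ring]
  have htr2 : ∀ j, i ≤ j → j < n → ∀ w : ℕ, (μ {ω | V (j + 1) ω = w ∧ V j ω = w}).toReal
      = (μ {ω | V j ω = w}).toReal * (1 - w / (2 * (j : ℝ) + 1)) := by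
    intro j h h' w
    rw [(htr j h h' w).2, show 2 * ((j : ℝ) + 1) - 1 = 2 * j + 1 by ring]
  have hrange : ∀ j, i ≤ j → j ≤ n → ∀ᵐ ω ∂μ, 1 ≤ V j ω ∧ V j ω ≤ j + 1 := by
    intro j hj
    induction j, hj using Nat.le_induction with
    | base =>
      intro _
      refine Filter.Eventually.of_forall fun ω => ?_
      have := h12 ω
      omega
    | succ j hj ih =>
      intro hjn
      filter_upwards [ih (by omega), ae_step (hV j) (hV (j + 1)) (htr1 j hj (by omega))
        (htr2 j hj (by omega))] with ω h1 h2
      omega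
  have main : ∀ j, i ≤ j → j ≤ n → ∃ M : ℝ, 1 < M ∧ M ^ 2 ≤ 4 * j ∧
      ∑ k ∈ Finset.range (j + 1), μ.real {ω | V j ω = k + 1} * ((k : ℝ) + 1) = M ∧
      L1le (fun k => μ.real {ω | V j ω = k + 1} - (1 - 1 / M) ^ k * (1 / M))
        (29 / i - 26 / j) := by
    intro j hj
    induction j, hj using Nat.le_induction with
    | base =>
      intro _
      obtain ⟨hP1, hL⟩ := base_bound (hV i) hi h12 hinit
      have hpos : (0 : ℝ) < 2 * i - 1 := by linarith
      refine ⟨2 * i / (2 * i - 1), ?_, ?_, ?_, ?_⟩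
      · rw [one_lt_div hpos]; linarith
      · have h2 : 2 * (i : ℝ) / (2 * i - 1) ≤ 2 := by rw [div_le_iff₀ hpos]; linarith
        have h0 : 0 ≤ 2 * (i : ℝ) / (2 * i - 1) := by positivity
        nlinarith
      · have hsub : Finset.range 2 ⊆ Finset.range (i + 1) :=
          Finset.range_subset_range.mpr (by omega)
        rw [← Finset.sum_subset hsub]
        · have h2' : μ.real {ω | V i ω = 1 + 1} = 1 / (2 * (i : ℝ) - 1) := hinit
          simp only [Finset.sum_range_succ, Finset.range_zero, Finset.sum_empty, zero_add, hP1, h2']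
          push_cast
          field_simp
          ring
        · intro k _ hk
          rw [Finset.mem_range] at hk
          have : {ω | V i ω = k + 1} = ∅ := by
            ext ω
            have := h12 ω
            simp only [Set.mem_ofPred_eq, Set.mem_empty_iff_false, iff_false]
            omega
          simp [this]
      · convert hL using 1
        ring
    | succ j hj ih =>
      intro hjn
      obtain ⟨M, hM, hM2, hsum, hL⟩ := ih (by omega)
      have hj1 : 1 ≤ j := hi.trans hj
      have hj' : (1 : ℝ) ≤ j := by exact_mod_cast hj1
      have hzero : ∀ k, j + 1 ≤ k → μ.real {ω | V j ω = k + 1} = 0 := by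
        intro k hk
        have : μ {ω | V j ω = k + 1} = 0 := by
          refine measure_mono_null ?_ (ae_iff.mp (hrange j hj (by omega)))
          intro ω (hω : V j ω = k + 1) hh
          omega
        simp [Measure.real, this]
      have hstep := mass_step (hV j) (hV (j + 1)) (htr1 j hj (by omega)) (htr2 j hj (by omega))
      have hb := step_bound hj1 hM hM2 hzero hL
      have hM0 : 0 < M := by linarith
      refine ⟨M * (1 + 1 / (2 * j + 1)), ?_, ?_, ?_, ?_⟩
      · have : 0 < M * (1 / (2 * (j : ℝ) + 1)) := by positivity
        linarith
      · -- Since `4 j (j + 1) ≤ (2 j + 1) ^ 2`, the bound on `M ^ 2` propagates.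
        have e : (M * (1 + 1 / (2 * (j : ℝ) + 1))) ^ 2
            = M ^ 2 * (4 * (j + 1) ^ 2 / (2 * j + 1) ^ 2) := by field_simp; ring
        rw [e]
        calc _ ≤ 4 * (j : ℝ) * (4 * (j + 1) ^ 2 / (2 * j + 1) ^ 2) := by gcongr
          _ ≤ _ := by
            push_cast
            rw [← mul_div_assoc, div_le_iff₀ (by positivity)]
            nlinarith
      · simp only [hstep]
        rw [sum_degStep, Finset.sum_range_succ, hsum, hzero (j + 1) le_rfl]
        simp
      · simp only [hstep]
        refine hb.mono ?_
        push_cast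
        have : (13 : ℝ) / j ^ 2 ≤ 26 / j - 26 / (j + 1) := by
          rw [div_sub_div _ _ (by positivity) (by positivity),
            div_le_div_iff₀ (by positivity) (by positivity)]
          nlinarith [mul_nonneg (by positivity : (0 : ℝ) ≤ j) (sub_nonneg.mpr hj')]
        linarith
  obtain ⟨M, hM, -, hsum, hL⟩ := main n hin le_rfl
  have hmean : ∫ ω, (V n ω : ℝ) ∂μ = M := by
    rw [integral_mass (hV n) (hrange n hin le_rfl) (fun k => (k : ℝ)), ← hsum]
    push_cast
    rfl
  have hM0 : 0 < M := by linarith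
  rw [hmean]
  refine dTV_le (hV n) (hrange n hin le_rfl) (by positivity)
    (by rw [div_lt_one hM0]; exact hM) (hL.mono ?_)
  have : (0 : ℝ) ≤ 26 / n := by positivity
  linarith
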